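/- Let a, b, c > 0 satisfy λ/(1−λ) = a·c/b. Then for every ω ∈ (0,1): Ψ(ω, λ, a·s, b·s, c) ≤ d^{−2γ} · OPT(a, b, c, s). -/

import Mathlib

/-- `q(x) = exp(x) - x - 1`. -/
noncomputable def q (x : ℝ) : ℝ := Real.exp x - x - 1

/-- `Q(x) = x·(exp(x) − 1)/(exp(x) − x − 1)`. -/
noncomputable def Qf (x : ℝ) : ℝ := x * (Real.exp x - 1) / (Real.exp x - x - 1)

/-- The generating polynomial `p(z) = (1/d)·((1+z)^k + (d−1)·(1 − z/(d−1))^k)`. -/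
noncomputable def pgen (d k : ℕ) (z : ℝ) : ℝ :=
  (1/(d:ℝ)) * ((1+z)^k + ((d:ℝ)-1) * (1 - z/((d:ℝ)-1))^k)

/-- `Ψ(ω,λ,x,y,z)` for the uniquely extendible case. -/
noncomputable def Psi (d k : ℕ) (γ s ω lam x y z : ℝ) : ℝ :=
  (((d:ℝ)-1) * q x / (q s * ω)) ^ ω *
  (q y / (q s * (1-ω))) ^ (1-ω) *
  (lam * s / (x*z)) ^ (lam * ((k:ℝ)*γ)) *
  ((1-lam) * s / y) ^ ((1-lam) * ((k:ℝ)*γ)) *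
  (pgen d k z / (d:ℝ)) ^ γ

/-- `OPT(x,y,z,s)` for domain size `d`, with `Q = Q(s)`. -/
noncomputable def OPTu (d : ℕ) (x y z s : ℝ) : ℝ :=
  (((d:ℝ)-1) * q (s*x) / q s + q (s*y) / q s) *
  (1/(y + x*z)) ^ (Qf s) *
  ((1+z) ^ (Qf s) + ((d:ℝ)-1) * |1 - z/((d:ℝ)-1)| ^ (Qf s))

/-!
The two factors of `Ψ` carrying `ω` are bounded by weighted AM–GM, with weights `ω` and `1 - ω`. The
relation between `λ` and `a, b, c` is exactly the one that makes the bases of the two factors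
carrying `λ` coincide, so that their product no longer depends on `λ`. The last factor is bounded by
subadditivity of `t ↦ t ^ γ`, and the weight `d - 1 ≥ 1` leaves the power because `γ ≤ 1`.
-/

lemma q_nonneg (x : ℝ) : 0 ≤ q x := by
  have := Real.add_one_le_exp x
  unfold q
  linarith

lemma rpow_div_mul_rpow_div_le_add {A B w : ℝ} (hA : 0 ≤ A) (hB : 0 ≤ B)
    (hw : w ∈ Set.Ioo (0 : ℝ) 1) :
    (A / w) ^ w * (B / (1 - w)) ^ (1 - w) ≤ A + B := by
  obtain ⟨hw₀, hw₁⟩ := hw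
  have hw₁' : 0 < 1 - w := sub_pos.mpr hw₁
  calc (A / w) ^ w * (B / (1 - w)) ^ (1 - w)
      ≤ w * (A / w) + (1 - w) * (B / (1 - w)) :=
        Real.geom_mean_le_arith_mean2_weighted hw₀.le hw₁'.le (by positivity) (by positivity)
          (by ring)
    _ = A + B := by rw [mul_div_cancel₀ _ hw₀.ne', mul_div_cancel₀ _ hw₁'.ne']

lemma rpow_mul_rpow_eq_of_odds_eq {s lam a b c : ℝ} (hs : s ≠ 0) (hlam : lam ≠ 1)
    (ha : 0 < a) (hb : 0 < b) (hc : 0 < c) (hrel : lam / (1 - lam) = a * c / b) (r : ℝ) :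
    (lam * s / (a * s * c)) ^ (lam * r) * ((1 - lam) * s / (b * s)) ^ ((1 - lam) * r)
      = (1 / (b + a * c)) ^ r := by
  have hbac : 0 < b + a * c := by positivity
  have hcross : lam * b = a * c * (1 - lam) :=
    (div_eq_div_iff (sub_ne_zero.mpr hlam.symm) hb.ne').mp hrel
  have hbase₁ : lam * s / (a * s * c) = 1 / (b + a * c) := by
    rw [div_eq_div_iff (by positivity) hbac.ne']
    linear_combination s * hcross
  have hbase₂ : (1 - lam) * s / (b * s) = 1 / (b + a * c) := by
    rw [div_eq_div_iff (by positivity) hbac.ne']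
    linear_combination -s * hcross
  rw [hbase₁, hbase₂, ← Real.rpow_add (by positivity), ← add_mul, add_sub_cancel, one_mul]

lemma abs_pow_add_mul_pow_rpow_le {m γ : ℝ} (hm : 1 ≤ m) (hγ₀ : 0 ≤ γ) (hγ₁ : γ ≤ 1)
    (k : ℕ) (x y : ℝ) :
    |x ^ k + m * y ^ k| ^ γ ≤ |x| ^ (k * γ) + m * |y| ^ (k * γ) := by
  have hm₀ : 0 ≤ m := zero_le_one.trans hm
  have habs : |x ^ k + m * y ^ k| ≤ |x| ^ k + m * |y| ^ k := by
    simpa only [abs_mul, abs_pow, abs_of_nonneg hm₀] using abs_add_le (x ^ k) (m * y ^ k)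
  calc |x ^ k + m * y ^ k| ^ γ
      ≤ (|x| ^ k + m * |y| ^ k) ^ γ := Real.rpow_le_rpow (abs_nonneg _) habs hγ₀
    _ ≤ (|x| ^ k) ^ γ + (m * |y| ^ k) ^ γ :=
        Real.rpow_add_le_add_rpow (by positivity) (by positivity) hγ₀ hγ₁
    _ = |x| ^ (k * γ) + m ^ γ * |y| ^ (k * γ) := by
        rw [Real.mul_rpow hm₀ (by positivity), Real.rpow_natCast_mul (abs_nonneg x),
          Real.rpow_natCast_mul (abs_nonneg y)]
    _ ≤ |x| ^ (k * γ) + m * |y| ^ (k * γ) := by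
        gcongr
        exact Real.rpow_le_self_of_one_le hm hγ₁

lemma pgen_div_rpow_le {d : ℕ} (hd : 2 ≤ d) {γ z : ℝ} (hγ₀ : 0 ≤ γ) (hγ₁ : γ ≤ 1)
    (hz : -1 ≤ z) (k : ℕ) :
    (pgen d k z / d) ^ γ ≤
      (d : ℝ) ^ (-(2 * γ)) *
        ((1 + z) ^ (k * γ) + ((d : ℝ) - 1) * |1 - z / ((d : ℝ) - 1)| ^ (k * γ)) := by
  have hd' : (2 : ℝ) ≤ d := mod_cast hd
  set S : ℝ := (1 + z) ^ k + ((d : ℝ) - 1) * (1 - z / ((d : ℝ) - 1)) ^ k with hS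
  have hpgen : pgen d k z / d = (d : ℝ) ^ (-2 : ℝ) * S := by
    rw [pgen, ← hS, Real.rpow_neg (by positivity), Real.rpow_two]
    field_simp
  -- Passing to the absolute value first makes the sign of `pgen d k z` irrelevant.
  calc (pgen d k z / d) ^ γ
      ≤ |pgen d k z / d| ^ γ := (le_abs_self _).trans (Real.abs_rpow_le_abs_rpow _ _)
    _ = (d : ℝ) ^ (-(2 * γ)) * |S| ^ γ := by
        rw [hpgen, abs_mul, abs_of_nonneg (by positivity),
          Real.mul_rpow (by positivity) (abs_nonneg S), ← Real.rpow_mul (by positivity), neg_mul]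
    _ ≤ _ := by
        gcongr
        simpa only [abs_of_nonneg (neg_le_iff_add_nonneg'.mp hz)] using
          abs_pow_add_mul_pow_rpow_le (by linarith : (1 : ℝ) ≤ (d : ℝ) - 1) hγ₀ hγ₁ k (1 + z)
            (1 - z / ((d : ℝ) - 1))

theorem stmt15_general (k : ℕ) {d : ℕ} (hd : 2 ≤ d) {γ : ℝ} (hγ₀ : 0 ≤ γ) (hγ₁ : γ ≤ 1)
    {s lam a b c : ℝ} (hs : s ≠ 0) (hlam : lam ≠ 1) (ha : 0 < a) (hb : 0 < b) (hc : 0 < c)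
    (hrel : lam / (1 - lam) = a * c / b) {ω : ℝ} (hω : ω ∈ Set.Ioo (0 : ℝ) 1) :
    Psi d k γ s ω lam (a * s) (b * s) c ≤
      (d : ℝ) ^ (-(2 * γ)) *
        ((((d : ℝ) - 1) * q (s * a) / q s + q (s * b) / q s) *
          (1 / (b + a * c)) ^ (k * γ) *
          ((1 + c) ^ (k * γ) + ((d : ℝ) - 1) * |1 - c / ((d : ℝ) - 1)| ^ (k * γ))) := by
  have hd₁ : (0 : ℝ) ≤ (d : ℝ) - 1 := sub_nonneg.mpr (mod_cast (by omega : 1 ≤ d))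
  have hω₀ : 0 ≤ ω := hω.1.le
  have hω₁ : 0 ≤ 1 - ω := sub_nonneg.mpr hω.2.le
  set A : ℝ := ((d : ℝ) - 1) * q (s * a) / q s with hAdef
  set B : ℝ := q (s * b) / q s with hBdef
  set R : ℝ := (1 / (b + a * c)) ^ (k * γ) with hRdef
  set E : ℝ := (1 + c) ^ (k * γ) + ((d : ℝ) - 1) * |1 - c / ((d : ℝ) - 1)| ^ (k * γ)
  have hA : 0 ≤ A := div_nonneg (mul_nonneg hd₁ (q_nonneg _)) (q_nonneg _)
  have hB : 0 ≤ B := div_nonneg (q_nonneg _) (q_nonneg _)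
  calc Psi d k γ s ω lam (a * s) (b * s) c
      = (A / ω) ^ ω * (B / (1 - ω)) ^ (1 - ω) * R * (pgen d k c / d) ^ γ := by
        rw [Psi, mul_assoc (_ * _) (_ ^ (lam * _)),
          rpow_mul_rpow_eq_of_odds_eq hs hlam ha hb hc hrel, hAdef, hBdef, hRdef,
          mul_comm a s, mul_comm b s, ← div_div, ← div_div]
    _ ≤ (A / ω) ^ ω * (B / (1 - ω)) ^ (1 - ω) * R * ((d : ℝ) ^ (-(2 * γ)) * E) := by
        gcongr
        exact pgen_div_rpow_le hd hγ₀ hγ₁ (by linarith) k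
    _ ≤ (A + B) * R * ((d : ℝ) ^ (-(2 * γ)) * E) := by
        gcongr
        exact rpow_div_mul_rpow_div_le_add hA hB hω
    _ = (d : ℝ) ^ (-(2 * γ)) * ((A + B) * R * E) := mul_left_comm _ _ _

theorem stmt15 (k d : ℕ) (hk : 1 ≤ k) (hd : 2 ≤ d) (γ : ℝ)
    (hγ : γ ∈ Set.Ioo (0:ℝ) 1) (hkγ : 2 < (k:ℝ) * γ)
    (s : ℝ) (hs : 0 < s) (hQs : Qf s = (k:ℝ) * γ)
    (lam a b c : ℝ) (hlam : lam ∈ Set.Ioo (0:ℝ) 1)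
    (ha : 0 < a) (hb : 0 < b) (hc : 0 < c)
    (hrel : lam / (1 - lam) = a * c / b) :
    ∀ ω ∈ Set.Ioo (0:ℝ) 1,
      Psi d k γ s ω lam (a*s) (b*s) c ≤ (d:ℝ) ^ (-(2*γ)) * OPTu d a b c s := by
  intro ω hω
  simpa only [OPTu, hQs] using
    stmt15_general k hd hγ.1.le hγ.2.le hs.ne' hlam.2.ne ha hb hc hrel hω
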